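/- Syzygy Rank Criterion: With notation as in the context, the reduced projective hypersurface D = V(f) is strongly Euler homogeneous at the point p if and only if rk M'_f(p) = rk M_f(p); equivalently, if and only if the vector p lies in the ℂ-linear span of {ev_p(a) : a ∈ K} in ℂ^{n+1}. -/

import Mathlib

open MvPolynomial

noncomputable section

/-- The Jacobian syzygy module `K` of `f`, as a set:
tuples `a = (a_0, …, a_n)` of polynomials with `∑ a_i ∂f/∂x_i = 0`. -/
def syzSet (n : ℕ) (f : MvPolynomial (Fin (n + 1)) ℂ) :
    Set (Fin (n + 1) → MvPolynomial (Fin (n + 1)) ℂ) :=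
  {a | ∑ i, a i * pderiv i f = 0}

/-- The image of the syzygy module under coordinatewise evaluation at `p`. -/
def evSyz (n : ℕ) (f : MvPolynomial (Fin (n + 1)) ℂ) (p : Fin (n + 1) → ℂ) :
    Set (Fin (n + 1) → ℂ) :=
  (fun a => fun i => eval p (a i)) '' syzSet n f

/-- The syzygy rank `rk M'_f(p)`. -/
def syzRank (n : ℕ) (f : MvPolynomial (Fin (n + 1)) ℂ) (p : Fin (n + 1) → ℂ) : ℕ :=
  Module.finrank ℂ (Submodule.span ℂ (evSyz n f p))

/-- The augmented syzygy rank `rk M_f(p)`. -/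
def augSyzRank (n : ℕ) (f : MvPolynomial (Fin (n + 1)) ℂ) (p : Fin (n + 1) → ℂ) : ℕ :=
  Module.finrank ℂ (Submodule.span ℂ (evSyz n f p ∪ {p}))

/-- The dehomogenization `g(y_1,…,y_n) = f(1,y_1,…,y_n)`. -/
def dehom (n : ℕ) (f : MvPolynomial (Fin (n + 1)) ℂ) : MvPolynomial (Fin n) ℂ :=
  aeval (Fin.cons (1 : MvPolynomial (Fin n) ℂ) fun i => X i) f

/-- `D = V(f)` is strongly Euler homogeneous at `p` (with `p_0 = 1`): there exist an open
neighborhood `U` of `q = (p_1,…,p_n)` and analytic functions `a_i` on `U` vanishing at `q`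
with `g = ∑ a_i ∂g/∂y_i` on `U`, where `g` is the dehomogenization of `f`. -/
def StronglyEulerHomogeneousAt (n : ℕ) (f : MvPolynomial (Fin (n + 1)) ℂ)
    (p : Fin (n + 1) → ℂ) : Prop :=
  ∃ (U : Set (Fin n → ℂ)) (a : Fin n → (Fin n → ℂ) → ℂ),
    IsOpen U ∧ (fun i => p i.succ) ∈ U ∧
    (∀ i, ∀ y ∈ U, AnalyticAt ℂ (a i) y) ∧
    (∀ i, a i (fun j => p j.succ) = 0) ∧
    ∀ y ∈ U,
      eval y (dehom n f) = ∑ i, a i y * eval y (pderiv i (dehom n f))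

theorem pderiv_dehom (n : ℕ) (f : MvPolynomial (Fin (n + 1)) ℂ) (i : Fin n) :
    pderiv i (dehom n f) = dehom n (pderiv i.succ f) := by
  unfold dehom
  induction f using MvPolynomial.induction_on with
  | C a => simp
  | add p q hp hq => simp only [map_add, hp, hq]
  | mul_X p j hp =>
    simp only [map_mul, Derivation.leibniz, hp, aeval_X, smul_eq_mul, map_add]
    congr 1
    · congr 1
      refine Fin.cases ?_ (fun k => ?_) j
      · simp [pderiv_X_of_ne (Fin.succ_ne_zero i).symm]
      · simp only [Fin.cons_succ, pderiv_X]
        by_cases h : k = i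
        · subst h; simp
        · simp [Pi.single_apply, h]

theorem eval_dehom (n : ℕ) (f : MvPolynomial (Fin (n + 1)) ℂ) (y : Fin n → ℂ) :
    eval y (dehom n f) = eval (Fin.cons 1 y : Fin (n + 1) → ℂ) f := by
  unfold dehom
  induction f using MvPolynomial.induction_on with
  | C a => simp
  | add p q hp hq => simp only [map_add, hp, hq]
  | mul_X p j hp =>
    rw [map_mul, map_mul, hp, map_mul, aeval_X, eval_X]
    congr 1
    refine Fin.cases ?_ (fun k => ?_) j <;> simp

theorem aeval_mul_homog {σ S : Type*} [CommRing S] [Algebra ℂ S] {d : ℕ}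
    {φ : MvPolynomial σ ℂ} (h : φ.IsHomogeneous d) (c : S) (g : σ → S) :
    aeval (fun i => c * g i) φ = c ^ d * aeval g φ := by
  simp only [aeval_def, eval₂_eq, Finset.mul_sum]
  refine Finset.sum_congr rfl fun s hs => ?_
  have hd : ∑ i ∈ s.support, s i = d := by
    have := h (mem_support_iff.1 hs)
    rw [← this, Finsupp.weight_apply, Finsupp.sum]
    simp
  simp only [mul_pow, Finset.prod_mul_distrib, Finset.prod_pow_eq_pow_sum, hd]
  ring

theorem aeval_eq_eval_cpx {σ : Type*} (y : σ → ℂ) (h : MvPolynomial σ ℂ) :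
    aeval y h = eval y h := by
  rw [← coe_aeval_eq_eval]; rfl

theorem exists_translation {σ : Type*} (v : σ → ℂ) :
    ∃ τ : MvPolynomial σ ℂ →ₐ[ℂ] MvPolynomial σ ℂ, ∀ i, τ (X i) = X i + C (v i) :=
  ⟨aeval (fun i => X i + C (v i)), fun i => aeval_X (fun i => X i + C (v i)) i⟩

open Asymptotics Filter Topology in
theorem X_pow_dvd_of_isBigO (k : ℕ) (P : Polynomial ℂ)
    (h : (fun t : ℂ => P.eval t) =O[𝓝 0] fun t => t ^ k) : Polynomial.X ^ k ∣ P := by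
  induction k with
  | zero => simp
  | succ k ih =>
    obtain ⟨Q, rfl⟩ := ih (h.trans (by
      simpa [pow_succ] using (IsBigO.pow (isBigO_refl (fun t : ℂ => t) (𝓝 0)) k).mul
        ((continuous_id.tendsto (0:ℂ)).isBigO_one ℂ)))
    have h1 : (fun t : ℂ => Q.eval t) =O[𝓝[≠] 0] fun t => t := by
      obtain ⟨C, hC⟩ := (h.mono (nhdsWithin_le_nhds (s := {0}ᶜ))).bound
      refine IsBigO.of_bound C ?_
      filter_upwards [hC, self_mem_nhdsWithin] with t ht ht0
      have ht0 : 0 < ‖t‖ := norm_pos_iff.2 ht0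
      simp only [Polynomial.eval_mul, Polynomial.eval_pow, Polynomial.eval_X, norm_mul,
        norm_pow, pow_succ] at ht
      have : ‖t‖ ^ k * ‖Q.eval t‖ ≤ ‖t‖ ^ k * (C * ‖t‖) := by linarith
      exact le_of_mul_le_mul_left this (by positivity)
    have h2 : Tendsto (fun t : ℂ => Q.eval t) (𝓝[≠] 0) (𝓝 0) :=
      h1.trans_tendsto (tendsto_id.mono_left nhdsWithin_le_nhds)
    have h3 : Tendsto (fun t : ℂ => Q.eval t) (𝓝[≠] 0) (𝓝 (Q.eval 0)) :=
      (Q.continuous.tendsto 0).mono_left nhdsWithin_le_nhds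
    have h4 := tendsto_nhds_unique h3 h2
    rw [pow_succ]
    exact mul_dvd_mul_left _ (Polynomial.X_dvd_iff.2 (by rwa [Polynomial.coeff_zero_eq_eval_zero]))

open Asymptotics Filter Topology in
theorem mem_pow_vars_of_isBigO {m : ℕ} (k : ℕ) (h : MvPolynomial (Fin m) ℂ)
    (hO : (fun y : Fin m → ℂ => eval y h) =O[𝓝 0] fun y => ‖y‖ ^ k) :
    h ∈ idealOfVars (Fin m) ℂ ^ k := by
  have key : ∀ j < k, homogeneousComponent j h = 0 := by
    intro j hj
    apply MvPolynomial.funext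
    intro y
    rw [map_zero]
    set P : Polynomial ℂ := aeval (fun i => Polynomial.X * Polynomial.C (y i)) h with hP
    have hPe : ∀ t : ℂ, P.eval t = eval (t • y) h := by
      intro t
      have : ((Polynomial.aeval t).comp
          (aeval (fun i => Polynomial.X * Polynomial.C (y i)) :
            MvPolynomial (Fin m) ℂ →ₐ[ℂ] Polynomial ℂ)) = aeval (t • y) := by
        apply MvPolynomial.algHom_ext
        intro i
        rw [AlgHom.comp_apply, aeval_X, aeval_X, map_mul, Polynomial.aeval_X, Polynomial.aeval_C]
        rfl
      have h2 := DFunLike.congr_fun this h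
      rw [AlgHom.comp_apply, ← hP, Polynomial.coe_aeval_eq_eval, aeval_eq_eval_cpx] at h2
      exact h2
    have hdvd : Polynomial.X ^ k ∣ P := by
      apply X_pow_dvd_of_isBigO
      simp only [hPe]
      have ht : Tendsto (fun t : ℂ => t • y) (𝓝 0) (𝓝 0) := by
        have : Continuous (fun t : ℂ => t • y) := by fun_prop
        simpa using this.tendsto 0
      refine (hO.comp_tendsto ht).trans ?_
      refine IsBigO.of_bound (‖y‖ ^ k) (Eventually.of_forall fun t => ?_)
      simp [norm_smul, mul_pow, mul_comm]
    have hPc : P.coeff j = eval y (homogeneousComponent j h) := by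
      have hs : P = ∑ l ∈ Finset.range (h.totalDegree + 1),
          Polynomial.X ^ l * Polynomial.C (eval y (homogeneousComponent l h)) := by
        conv_lhs => rw [hP, ← sum_homogeneousComponent h, map_sum]
        refine Finset.sum_congr rfl fun l _ => ?_
        rw [aeval_mul_homog (homogeneousComponent_isHomogeneous l h)]
        congr 1
        have : (aeval (fun i => Polynomial.C (y i)) :
            MvPolynomial (Fin m) ℂ →ₐ[ℂ] Polynomial ℂ) =
            (Polynomial.CAlgHom).comp (aeval y) := by
          apply MvPolynomial.algHom_ext
          intro i
          simp
        rw [this]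
        simp [coe_aeval_eq_eval]
      rw [hs, Polynomial.finsetSum_coeff]
      simp only [Polynomial.coeff_X_pow_mul', Polynomial.coeff_C]
      by_cases hjd : j ∈ Finset.range (h.totalDegree + 1)
      · rw [Finset.sum_eq_single j]
        · simp
        · intro b _ hb
          by_cases hbj : b ≤ j
          · rw [if_pos hbj, if_neg]; omega
          · rw [if_neg hbj]
        · exact fun h => absurd hjd h
      · rw [Finset.mem_range] at hjd
        rw [homogeneousComponent_eq_zero j h (by omega), map_zero]
        refine Finset.sum_eq_zero fun b hb => ?_
        rw [Finset.mem_range] at hb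
        rw [if_pos (by omega), if_neg (by omega)]
    rw [← hPc]
    exact Polynomial.X_pow_dvd_iff.1 hdvd j hj
  rw [mem_pow_idealOfVars_iff']
  intro x hx
  have := congrArg (coeff x) (key _ hx)
  simpa [coeff_homogeneousComponent] using this

open Asymptotics Filter Topology in
theorem mem_pow_ker_of_isBigO {m : ℕ} (k : ℕ) (h : MvPolynomial (Fin m) ℂ) (p : Fin m → ℂ)
    (hO : (fun y : Fin m → ℂ => eval (p + y) h) =O[𝓝 0] fun y => ‖y‖ ^ k) :
    h ∈ (RingHom.ker (eval p)) ^ k := by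
  obtain ⟨τ, hτ⟩ := exists_translation p
  obtain ⟨τ', hτ'⟩ := exists_translation (-p)
  have h1 : ∀ y, eval y (τ h) = eval (p + y) h := by
    intro y
    have : (aeval y).comp τ = (aeval (p + y) : MvPolynomial (Fin m) ℂ →ₐ[ℂ] ℂ) := by
      apply MvPolynomial.algHom_ext
      intro i
      rw [AlgHom.comp_apply, hτ, map_add, aeval_X, aeval_C, aeval_X, Pi.add_apply, add_comm]
      rfl
    have h5 := DFunLike.congr_fun this h
    rwa [AlgHom.comp_apply, aeval_eq_eval_cpx, aeval_eq_eval_cpx] at h5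
  have h2 : τ' (τ h) = h := by
    have : τ'.comp τ = AlgHom.id ℂ _ := by
      apply MvPolynomial.algHom_ext
      intro i
      have hC : τ' (C (p i)) = C (p i) := τ'.commutes (p i)
      rw [AlgHom.comp_apply, hτ, map_add, hC, hτ', AlgHom.id_apply, Pi.neg_apply, map_neg]
      ring
    exact DFunLike.congr_fun this h
  have h3 : τ h ∈ idealOfVars (Fin m) ℂ ^ k := by
    apply mem_pow_vars_of_isBigO
    simpa only [h1] using hO
  have h4 : idealOfVars (Fin m) ℂ ≤ (RingHom.ker (eval p)).comap τ' := by
    rw [idealOfVars, Ideal.span_le]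
    rintro _ ⟨i, rfl⟩
    simp [hτ', RingHom.mem_ker]
  have h6 : τ h ∈ ((RingHom.ker (eval p)) ^ k).comap τ' :=
    Ideal.le_comap_pow τ' k (Ideal.pow_right_mono h4 k h3)
  rw [Ideal.mem_comap, h2] at h6
  exact h6

open Asymptotics Filter Topology in
theorem exists_taylor {m : ℕ} (k : ℕ) (A : (Fin m → ℂ) → ℂ) (p : Fin m → ℂ)
    (hA : AnalyticAt ℂ A p) : ∃ T : MvPolynomial (Fin m) ℂ,
      (fun y : Fin m → ℂ => A (p + y) - eval (p + y) T) =O[𝓝 0] fun y => ‖y‖ ^ k := by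
  obtain ⟨F, hF⟩ := hA
  have h := hF.isBigO_sub_partialSum_pow k
  refine ⟨∑ j ∈ Finset.range k, ∑ r : Fin j → Fin m,
    C (F j fun l => Pi.single (r l) 1) * ∏ l, (X (r l) - C (p (r l))), ?_⟩
  refine h.congr_left fun y => ?_
  congr 1
  symm
  simp only [FormalMultilinearSeries.partialSum, map_sum]
  refine Finset.sum_congr rfl fun j _ => ?_
  have hy : (fun _ : Fin j => y) = fun _ => ∑ i, y i • (Pi.single i 1 : Fin m → ℂ) := by
    funext l
    exact pi_eq_sum_univ' y
  rw [hy, (F j).map_sum]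
  refine Finset.sum_congr rfl fun r _ => ?_
  rw [(F j).map_smul_univ]
  simp [mul_comm]

open Asymptotics Filter Topology in
theorem exists_poly_relation {m s : ℕ} (f : MvPolynomial (Fin m) ℂ)
    (D : Fin s → MvPolynomial (Fin m) ℂ) (p : Fin m → ℂ) (A : Fin s → (Fin m → ℂ) → ℂ)
    (hA : ∀ i, AnalyticAt ℂ (A i) p) (hA0 : ∀ i, A i p = 0)
    (hf : ∀ᶠ x in 𝓝 p, eval x f = ∑ i, A i x * eval x (D i)) :
    ∃ (u : MvPolynomial (Fin m) ℂ) (b : Fin s → MvPolynomial (Fin m) ℂ),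
      eval p u = 1 ∧ (∀ i, eval p (b i) = 0) ∧ u * f = ∑ i, b i * D i := by
  set I : Ideal (MvPolynomial (Fin m) ℂ) := RingHom.ker (eval p) with hI
  set N : Ideal (MvPolynomial (Fin m) ℂ) := I • Ideal.span (Set.range D) with hN
  have hk : ∀ k : ℕ, ∃ h ∈ I ^ k, f - h ∈ N := by
    intro k
    choose T hT using fun i => exists_taylor (k + 1) (A i) p (hA i)
    have hT0 : ∀ i, T i ∈ I := by
      intro i
      have h0 : A i (p + 0) - eval (p + 0) (T i) = 0 :=
        IsBigO.eq_zero_of_norm_pow (x₀ := 0) (n := k + 1)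
          (f := fun y : Fin m → ℂ => A i (p + y) - eval (p + y) (T i))
          (by simpa using hT i) (by omega)
      rw [add_zero, hA0, zero_sub, neg_eq_zero] at h0
      exact h0
    refine ⟨f - ∑ i, T i * D i, ?_, ?_⟩
    · apply mem_pow_ker_of_isBigO
      have ht : Tendsto (fun y : Fin m → ℂ => p + y) (𝓝 0) (𝓝 p) := by
        have : Continuous (fun y : Fin m → ℂ => p + y) := by fun_prop
        simpa using this.tendsto 0
      have hb : (fun y : Fin m → ℂ => ∑ i, (A i (p + y) - eval (p + y) (T i)) *
          eval (p + y) (D i)) =O[𝓝 0] fun y => ‖y‖ ^ k := by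
        refine IsBigO.fun_sum fun i _ => ?_
        have hD : (fun y : Fin m → ℂ => eval (p + y) (D i)) =O[𝓝 0] fun _ => (1:ℝ) := by
          have : Continuous (fun y : Fin m → ℂ => eval (p + y) (D i)) :=
            (MvPolynomial.continuous_eval (D i)).comp (by fun_prop)
          exact (this.tendsto 0).isBigO_one ℝ
        have hT' : (fun y : Fin m → ℂ => A i (p + y) - eval (p + y) (T i))
            =O[𝓝 0] fun y => ‖y‖ ^ k := by
          refine (hT i).trans ?_
          have hn : (fun y : Fin m → ℂ => ‖y‖) =O[𝓝 0] fun _ => (1:ℝ) :=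
            (continuous_norm.tendsto 0).isBigO_one ℝ
          simpa [pow_succ] using (isBigO_refl (fun y : Fin m → ℂ => ‖y‖ ^ k) (𝓝 0)).mul hn
        simpa using hT'.mul hD
      refine hb.congr' ?_ EventuallyEq.rfl
      filter_upwards [ht.eventually hf] with y hy
      rw [map_sub, hy, map_sum, ← Finset.sum_sub_distrib]
      refine Finset.sum_congr rfl fun i _ => ?_
      rw [map_mul]; ring
    · rw [sub_sub_cancel]
      exact Ideal.sum_mem _ fun i _ =>
        Submodule.smul_mem_smul (hT0 i) (Ideal.subset_span ⟨i, rfl⟩)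
  have hmem : (Submodule.Quotient.mk f : MvPolynomial (Fin m) ℂ ⧸ N) ∈
      (⨅ i : ℕ, I ^ i • ⊤ : Submodule (MvPolynomial (Fin m) ℂ) (MvPolynomial (Fin m) ℂ ⧸ N)) := by
    rw [Submodule.mem_iInf]
    intro k
    obtain ⟨h, hh, hfh⟩ := hk k
    rw [(Submodule.Quotient.eq N).2 hfh]
    have : (Submodule.Quotient.mk h : MvPolynomial (Fin m) ℂ ⧸ N) =
        h • (Submodule.Quotient.mk 1 : MvPolynomial (Fin m) ℂ ⧸ N) := by
      rw [← Submodule.Quotient.mk_smul, smul_eq_mul, mul_one]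
    rw [this]
    exact Submodule.smul_mem_smul hh trivial
  obtain ⟨⟨r, hr⟩, hrf⟩ := (Ideal.mem_iInf_smul_pow_eq_bot_iff I _).1 hmem
  have hrN : (1 - r) * f ∈ N := by
    rw [← Submodule.Quotient.mk_smul, smul_eq_mul] at hrf
    have := (Submodule.Quotient.eq N).1 hrf.symm
    rwa [sub_mul, one_mul]
  rw [hN, Ideal.span, Submodule.mem_ideal_smul_span_iff_exists_sum] at hrN
  obtain ⟨b, hb, hbs⟩ := hrN
  refine ⟨1 - r, b, ?_, fun i => hb i, ?_⟩
  · have : eval p r = 0 := hr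
    simp [this]
  · rw [← hbs, Finsupp.sum_fintype _ _ (by simp)]
    simp

theorem mem_span_evSyz (n : ℕ) (f : MvPolynomial (Fin (n + 1)) ℂ) (p v : Fin (n + 1) → ℂ) :
    v ∈ Submodule.span ℂ (evSyz n f p) ↔ v ∈ evSyz n f p := by
  refine ⟨fun h => ?_, fun h => Submodule.subset_span h⟩
  induction h using Submodule.span_induction with
  | mem x h => exact h
  | zero => exact ⟨0, by simp [syzSet], by funext i; simp⟩
  | add x y _ _ hx hy =>
    obtain ⟨a, ha, rfl⟩ := hx
    obtain ⟨b, hb, rfl⟩ := hy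
    refine ⟨a + b, ?_, by funext i; simp⟩
    simp only [syzSet, Set.mem_ofPred_eq] at *
    simp [add_mul, Finset.sum_add_distrib, ha, hb]
  | smul c x _ hx =>
    obtain ⟨a, ha, rfl⟩ := hx
    refine ⟨c • a, ?_, by funext i; simp [smul_eval]⟩
    simp only [syzSet, Set.mem_ofPred_eq] at *
    simp [← Finset.smul_sum, ha]

theorem seh_of_mem (n d : ℕ) (hd : 1 ≤ d)
    (f : MvPolynomial (Fin (n + 1)) ℂ) (hhom : f.IsHomogeneous d)
    (p : Fin (n + 1) → ℂ) (hp0 : p 0 = 1) (h : p ∈ evSyz n f p) :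
    StronglyEulerHomogeneousAt n f p := by
  obtain ⟨a, ha, hap⟩ := h
  have hpc : (Fin.cons 1 (fun i => p i.succ) : Fin (n + 1) → ℂ) = p := by
    funext i
    refine Fin.cases ?_ (fun k => ?_) i <;> simp [hp0]
  have hcont : ∀ y, AnalyticAt ℂ (fun y : Fin n → ℂ => (Fin.cons 1 y : Fin (n + 1) → ℂ)) y := by
    intro y
    rw [analyticAt_pi_iff]
    refine Fin.cases ?_ (fun k => ?_)
    · simpa using analyticAt_const
    · simp only [Fin.cons_succ]
      exact (ContinuousLinearMap.proj (R := ℂ) (φ := fun _ : Fin n => ℂ) k).analyticAt y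
  have hE : ∀ (P : MvPolynomial (Fin (n + 1)) ℂ) (y : Fin n → ℂ),
      AnalyticAt ℂ (fun y : Fin n → ℂ => eval (Fin.cons 1 y : Fin (n + 1) → ℂ) P) y := by
    intro P y
    exact (AnalyticOnNhd.eval_mvPolynomial P _ (Set.mem_univ _)).fun_comp (hcont y)
  have hd0 : (d : ℂ) ≠ 0 := by exact_mod_cast (by omega : d ≠ 0)
  have hai : ∀ i, eval p (a i) = p i := fun i => congrFun hap i
  refine ⟨{y | eval (Fin.cons 1 y : Fin (n + 1) → ℂ) (a 0) ≠ 0},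
    fun i y => (d : ℂ)⁻¹ * (y i - eval (Fin.cons 1 y : Fin (n + 1) → ℂ) (a i.succ) /
      eval (Fin.cons 1 y : Fin (n + 1) → ℂ) (a 0)), ?_, ?_, ?_, ?_, ?_⟩
  · have : Continuous (fun y : Fin n → ℂ => eval (Fin.cons 1 y : Fin (n + 1) → ℂ) (a 0)) :=
      continuous_iff_continuousAt.2 fun y => (hE _ y).continuousAt
    exact isOpen_ne_fun this continuous_const
  · simp [hpc, hai, hp0]
  · intro i y hy
    exact analyticAt_const.mul
      (((ContinuousLinearMap.proj (R := ℂ) (φ := fun _ : Fin n => ℂ) i).analyticAt y).sub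
        ((hE _ y).div (hE _ y) hy))
  · intro i
    simp [hpc, hai, hp0]
  · intro y hy
    simp only [Set.mem_ofPred_eq] at hy
    simp only [pderiv_dehom, eval_dehom]
    set x : Fin (n + 1) → ℂ := Fin.cons 1 y with hx
    have e1 := congrArg (eval x) hhom.sum_X_mul_pderiv
    have e2 : eval x (∑ i, a i * pderiv i f) = 0 := by
      rw [show ∑ i, a i * pderiv i f = 0 from ha, map_zero]
    simp only [map_sum, map_mul, eval_X, nsmul_eq_mul, map_natCast] at e1 e2
    rw [Fin.sum_univ_succ] at e1 e2
    have hx0 : x 0 = 1 := rfl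
    have hxs : ∀ i : Fin n, x i.succ = y i := fun i => rfl
    simp only [hx0, hxs, one_mul] at e1
    simp only [sub_mul, mul_sub, Finset.sum_sub_distrib, mul_assoc, div_eq_inv_mul,
      ← Finset.mul_sum]
    set S1 := ∑ i : Fin n, y i * eval x (pderiv i.succ f)
    set S2 := ∑ i : Fin n, eval x (a i.succ) * eval x (pderiv i.succ f)
    field_simp
    linear_combination (-eval x (a 0)) * e1 + e2

open Filter Topology in
theorem mem_of_seh (n d : ℕ)
    (f : MvPolynomial (Fin (n + 1)) ℂ) (hhom : f.IsHomogeneous d) (hd : 1 ≤ d)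
    (p : Fin (n + 1) → ℂ) (hp0 : p 0 = 1) (h : StronglyEulerHomogeneousAt n f p) :
    p ∈ evSyz n f p := by
  obtain ⟨U, a, hU, hpU, ha, ha0, hg⟩ := h
  set φ : (Fin (n + 1) → ℂ) → (Fin n → ℂ) := fun x i => x i.succ / x 0 with hφ
  have hφp : φ p = fun i => p i.succ := by
    funext i; simp [hφ, hp0]
  have hpr : ∀ (i : Fin (n + 1)), AnalyticAt ℂ (fun x : Fin (n + 1) → ℂ => x i) p := fun i =>
    (ContinuousLinearMap.proj (R := ℂ) (φ := fun _ : Fin (n + 1) => ℂ) i).analyticAt p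
  have hφa : AnalyticAt ℂ φ p := by
    rw [analyticAt_pi_iff]
    intro i
    exact (hpr _).div (hpr _) (by simp [hp0])
  obtain ⟨u, b, hu, hb, hub⟩ := exists_poly_relation f (fun i : Fin n => pderiv i.succ f) p
    (fun i x => x 0 * a i (φ x))
    (fun i => (hpr 0).mul (AnalyticAt.fun_comp (by rw [hφp]; exact ha i _ hpU) hφa))
    (fun i => by simp [hφp, ha0]) (by
      have e1 : ∀ᶠ x in 𝓝 p, φ x ∈ U :=
        hφa.continuousAt.eventually (hU.mem_nhds (by rwa [hφp]))
      have e2 : ∀ᶠ x in 𝓝 p, x 0 ≠ 0 :=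
        (hpr 0).continuousAt.eventually_ne (by simp [hp0])
      filter_upwards [e1, e2] with x hx hx0
      have h1 := hg _ hx
      simp only [pderiv_dehom, eval_dehom] at h1
      have hx' : (fun i => x 0 * (Fin.cons 1 (φ x) : Fin (n + 1) → ℂ) i) = x := by
        funext i
        refine Fin.cases ?_ (fun k => ?_) i
        · simp
        · simp [hφ]; field_simp
      have hh : ∀ {e : ℕ} {ψ : MvPolynomial (Fin (n + 1)) ℂ}, ψ.IsHomogeneous e →
          eval x ψ = x 0 ^ e * eval (Fin.cons 1 (φ x) : Fin (n + 1) → ℂ) ψ := by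
        intro e ψ hψ
        have := aeval_mul_homog hψ (x 0) (Fin.cons 1 (φ x) : Fin (n + 1) → ℂ)
        rw [hx'] at this
        simpa [coe_aeval_eq_eval] using this
      rw [hh hhom, h1, Finset.mul_sum]
      refine Finset.sum_congr rfl fun i _ => ?_
      rw [hh (hhom.pderiv (i := i.succ))]
      obtain ⟨e, rfl⟩ : ∃ e, d = e + 1 := ⟨d - 1, by omega⟩
      simp only [Nat.add_sub_cancel]
      ring)
  refine ⟨fun i => u * X i - (d : MvPolynomial (Fin (n + 1)) ℂ) *
    (Fin.cons 0 b : Fin (n + 1) → MvPolynomial (Fin (n + 1)) ℂ) i, ?_, ?_⟩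
  · have e1 := hhom.sum_X_mul_pderiv
    rw [nsmul_eq_mul] at e1
    simp only [syzSet, Set.mem_ofPred_eq, sub_mul, Finset.sum_sub_distrib, mul_assoc,
      ← Finset.mul_sum, e1]
    rw [Fin.sum_univ_succ]
    simp only [Fin.cons_zero, Fin.cons_succ, zero_mul, zero_add, ← hub]
    ring
  · funext i
    refine Fin.cases ?_ (fun k => ?_) i
    · simp [hu]
    · simp [hu, hb]

/-- **Syzygy Rank Criterion.** A reduced projective hypersurface `D = V(f)` is strongly Euler
homogeneous at `p ∈ D` iff `rk M'_f(p) = rk M_f(p)`, equivalently iff `p` lies in the span of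
the evaluated Jacobian syzygies at `p`. -/
theorem syzygy_rank_criterion (n d : ℕ) (hn : 1 ≤ n) (hd : 1 ≤ d)
    (f : MvPolynomial (Fin (n + 1)) ℂ) (hsf : Squarefree f) (hhom : f.IsHomogeneous d)
    (p : Fin (n + 1) → ℂ) (hp0 : p 0 = 1) (hpf : eval p f = 0) :
    (StronglyEulerHomogeneousAt n f p ↔ syzRank n f p = augSyzRank n f p) ∧
    (StronglyEulerHomogeneousAt n f p ↔ p ∈ Submodule.span ℂ (evSyz n f p)) := by
  have h2 : StronglyEulerHomogeneousAt n f p ↔ p ∈ Submodule.span ℂ (evSyz n f p) := by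
    rw [mem_span_evSyz]
    exact ⟨mem_of_seh n d f hhom hd p hp0, seh_of_mem n d hd f hhom p hp0⟩
  refine ⟨h2.trans ?_, h2⟩
  unfold syzRank augSyzRank
  constructor
  · intro h
    rw [Submodule.span_union, sup_eq_left.2]
    simpa [Submodule.span_le] using h
  · intro h
    have hle : Submodule.span ℂ (evSyz n f p) ≤ Submodule.span ℂ (evSyz n f p ∪ {p}) :=
      Submodule.span_mono Set.subset_union_left
    rw [Submodule.eq_of_le_of_finrank_eq hle h]
    exact Submodule.subset_span (Or.inr rfl)

end
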